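/- Let ζ be a primitive aperiodic binary substitution of constant length q ≥ 2. Then for every y ∈ X_ζ and every m, ℓ ∈ ℕ, the asymptotic recurrence rates RR_ℓ(y^{(m)},∞,2^{-h}) and RR_{ℓ+1}(y^{(m)},∞,2^{-h}) exist for all h ∈ ℕ and lim_{h→∞} RR_{ℓ+1}(y^{(m)},∞,2^{-h}) / RR_ℓ(y^{(m)},∞,2^{-h}) = 1. -/

import Mathlib

open Filter Topology MeasureTheory

namespace RQA

/-- The standard metric on symbolic sequences over an alphabet `α`:
`ρ(x,y) = 2^{-min{i : x i ≠ y i}}` for `x ≠ y` and `ρ(x,x) = 0`. -/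
noncomputable def seqDist {α : Type*} (x y : ℕ → α) : ℝ :=
  haveI := Classical.propDecidable (x = y)
  if x = y then 0 else (2 : ℝ) ^ (-((sInf {i : ℕ | x i ≠ y i} : ℕ) : ℤ))

/-- The (one-sided) shift on sequences. -/
def shift {α : Type*} (x : ℕ → α) : ℕ → α := fun i => x (i + 1)

/-- The embedded sequence `x^{(m)}`, a sequence over the alphabet `α^m`. -/
def embedSeq {α : Type*} (m : ℕ) (x : ℕ → α) : ℕ → (Fin m → α) :=
  fun j t => x (j + (t : ℕ))

section RQAdefs

variable {X : Type*} (d : X → X → ℝ) (f : X → X) (x : X)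

/-- The entry of the recurrence plot at `(i,j)` equals `1`. -/
def RPone (ε : ℝ) (i j : ℕ) : Prop := d (f^[i] x) (f^[j] x) ≤ ε

/-- `(i, j, l)` is a diagonal line in the recurrence plot `RP(x, n, ε)`. -/
def IsLine (n : ℕ) (ε : ℝ) (i j l : ℕ) : Prop :=
  1 ≤ l ∧ i + l ≤ n ∧ j + l ≤ n ∧ i ≠ j ∧
  (∀ h, h < l → RPone d f x ε (i + h) (j + h)) ∧
  (0 < i → 0 < j → ¬ RPone d f x ε (i - 1) (j - 1)) ∧
  (max i j + l < n → ¬ RPone d f x ε (i + l) (j + l))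

/-- `N_l(x, n, ε)`: the number of diagonal lines of length exactly `l`. -/
noncomputable def Nlines (n : ℕ) (ε : ℝ) (l : ℕ) : ℕ :=
  Set.ncard {p : ℕ × ℕ | IsLine d f x n ε p.1 p.2 l}

/-- `P_l(x, n, ε) = N_l/(n² − n)`. -/
noncomputable def Pline (n : ℕ) (ε : ℝ) (l : ℕ) : ℝ :=
  (Nlines d f x n ε l : ℝ) / ((n : ℝ) ^ 2 - (n : ℝ))

/-- `P≥_ℓ(x, n, ε) = Σ_{l ≥ ℓ} P_l`. -/
noncomputable def PlineGe (n : ℕ) (ε : ℝ) (ℓ : ℕ) : ℝ :=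
  ∑' k : ℕ, Pline d f x n ε (ℓ + k)

/-- The recurrence rate `RR_ℓ(x, n, ε) = Σ_{l ≥ ℓ} l · P_l`. -/
noncomputable def RRate (n : ℕ) (ε : ℝ) (ℓ : ℕ) : ℝ :=
  ∑' k : ℕ, ((ℓ + k : ℕ) : ℝ) * Pline d f x n ε (ℓ + k)

/-- The determinism `DET_ℓ(x, n, ε) = RR_ℓ/RR_1`. -/
noncomputable def DETrm (n : ℕ) (ε : ℝ) (ℓ : ℕ) : ℝ :=
  RRate d f x n ε ℓ / RRate d f x n ε 1

/-- The average line length `L_ℓ(x, n, ε) = RR_ℓ/P≥_ℓ`. -/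
noncomputable def LAvg (n : ℕ) (ε : ℝ) (ℓ : ℕ) : ℝ :=
  RRate d f x n ε ℓ / PlineGe d f x n ε ℓ

/-- The entropy of line lengths
`ENT_ℓ(x, n, ε) = log P≥_ℓ − (1/P≥_ℓ)·Σ_{l≥ℓ} P_l · log P_l` (with `0·log 0 = 0`). -/
noncomputable def ENTln (n : ℕ) (ε : ℝ) (ℓ : ℕ) : ℝ :=
  Real.log (PlineGe d f x n ε ℓ) -
    (PlineGe d f x n ε ℓ)⁻¹ *
      ∑' k : ℕ, Pline d f x n ε (ℓ + k) * Real.log (Pline d f x n ε (ℓ + k))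

/-- The correlation sum
`C_ℓ(x, n, ε) = n^{-2}·#{(i,j) ∈ [0,n)² : d_ℓ(f^i x, f^j x) ≤ ε}`,
where `d_ℓ` is the Bowen metric. -/
noncomputable def corrSum (ℓ n : ℕ) (ε : ℝ) : ℝ :=
  (Set.ncard {p : ℕ × ℕ | p.1 < n ∧ p.2 < n ∧
      ∀ k, k < ℓ → d (f^[p.1 + k] x) (f^[p.2 + k] x) ≤ ε} : ℝ) / (n : ℝ) ^ 2

end RQAdefs

/-- The extension of a substitution to a morphism of the free monoid of finite words. -/
def substWord (ζ : Bool → List Bool) : List Bool → List Bool :=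
  fun w => w.foldr (fun a r => ζ a ++ r) []

/-- `ζ` is a (binary) substitution of constant length `q ≥ 2`. -/
def IsConstLenSubst (ζ : Bool → List Bool) (q : ℕ) : Prop :=
  2 ≤ q ∧ ∀ a : Bool, (ζ a).length = q

/-- The language `L_ζ`: subwords of the words `ζ^k(a)`, `a ∈ A`, `k ≥ 1`. -/
def substLang (ζ : Bool → List Bool) : Set (List Bool) :=
  {w | ∃ a : Bool, ∃ k : ℕ, 1 ≤ k ∧ w <:+: (substWord ζ)^[k] [a]}

/-- The substitution subshift `X_ζ`. -/
def SubstShift (ζ : Bool → List Bool) : Set (ℕ → Bool) :=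
  {y | ∀ n : ℕ, (List.ofFn fun t : Fin n => y (t : ℕ)) ∈ substLang ζ}

/-- `ζ` is primitive. -/
def IsPrimitive (ζ : Bool → List Bool) : Prop :=
  ∃ k : ℕ, 1 ≤ k ∧ ∀ a b : Bool, b ∈ (substWord ζ)^[k] [a]

/-- `ζ` is aperiodic: `X_ζ` contains a non-periodic sequence. -/
def IsAperiodic (ζ : Bool → List Bool) : Prop :=
  ∃ y ∈ SubstShift ζ, ∀ p : ℕ, 1 ≤ p → ∃ i : ℕ, y (i + p) ≠ y i

/-- The action of a constant length-`q` substitution on infinite sequences. -/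
def substSeq (ζ : Bool → List Bool) (q : ℕ) (x : ℕ → Bool) : ℕ → Bool :=
  fun i => (ζ (x (i / q))).getD (i % q) false

/-- `(i, j, l)` is a line in the infinite symbolic recurrence plot `RP(x, ∞, ε₀)`. -/
def IsInfLine (x : ℕ → Bool) (i j l : ℕ) : Prop :=
  1 ≤ l ∧ i ≠ j ∧ (∀ h, h < l → x (i + h) = x (j + h)) ∧
  (0 < i → 0 < j → x (i - 1) ≠ x (j - 1)) ∧ x (i + l) ≠ x (j + l)

/-- `K_l`: the set of starting points `(i,j)`, `i,j ≥ 1`, of inner lines of length `l`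
in the infinite symbolic recurrence plot. -/
def Kset (x : ℕ → Bool) (l : ℕ) : Set (ℕ × ℕ) :=
  {p | 1 ≤ p.1 ∧ 1 ≤ p.2 ∧ IsInfLine x p.1 p.2 l}

/-- `#(M ∩ [0,n)²)/n²`. -/
noncomputable def densCount (M : Set (ℕ × ℕ)) (n : ℕ) : ℝ :=
  (Set.ncard (M ∩ {p : ℕ × ℕ | p.1 < n ∧ p.2 < n}) : ℝ) / (n : ℝ) ^ 2

/-- `M ⊆ ℕ²` has asymptotic density `a`. -/
def HasDens (M : Set (ℕ × ℕ)) (a : ℝ) : Prop :=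
  Tendsto (densCount M) atTop (𝓝 a)

/-- `δ_l(n) = #(K_l ∩ [1,n)²)/(n² − n)`. -/
noncomputable def deltaK (x : ℕ → Bool) (l n : ℕ) : ℝ :=
  (Set.ncard (Kset x l ∩ {p : ℕ × ℕ | p.1 < n ∧ p.2 < n}) : ℝ) / ((n : ℝ) ^ 2 - (n : ℝ))

/-- `M` is a minimal subset of the subshift `Y`. -/
def IsMinimalSubset (Y M : Set (ℕ → Bool)) : Prop :=
  M ⊆ Y ∧ M.Nonempty ∧ IsClosed M ∧ (∀ z ∈ M, shift z ∈ M) ∧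
  ∀ M' : Set (ℕ → Bool), M' ⊆ M → M'.Nonempty → IsClosed M' →
    (∀ z ∈ M', shift z ∈ M') → M' = M

end RQA

open RQA

namespace RQAaux

/-- agreement of length `L` -/
def agree (y : ℕ → Bool) (L i j : ℕ) : Prop := ∀ t, t < L → y (i + t) = y (j + t)

lemma sw_append (ζ : Bool → List Bool) (u v : List Bool) :
    substWord ζ (u ++ v) = substWord ζ u ++ substWord ζ v := by
  induction u with
  | nil => simp [substWord]
  | cons a u ih =>
    simp only [substWord, List.cons_append, List.foldr_cons, List.append_assoc] at ih ⊢
    rw [ih]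

lemma it_append (ζ : Bool → List Bool) (k : ℕ) (u v : List Bool) :
    (substWord ζ)^[k] (u ++ v) = (substWord ζ)^[k] u ++ (substWord ζ)^[k] v := by
  induction k generalizing u v with
  | zero => rfl
  | succ k ih => simp only [Function.iterate_succ, Function.comp, sw_append, ih]

lemma sw_length {ζ : Bool → List Bool} {q : ℕ} (h : ∀ a, (ζ a).length = q) (u : List Bool) :
    (substWord ζ u).length = q * u.length := by
  induction u with
  | nil => simp [substWord]
  | cons a u ih =>
    have : substWord ζ (a :: u) = ζ a ++ substWord ζ u := rfl
    rw [this, List.length_append, ih, h, List.length_cons]; ring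

lemma it_length {ζ : Bool → List Bool} {q : ℕ} (h : ∀ a, (ζ a).length = q) (k : ℕ)
    (u : List Bool) : ((substWord ζ)^[k] u).length = q ^ k * u.length := by
  induction k generalizing u with
  | zero => simp
  | succ k ih => rw [Function.iterate_succ, Function.comp, ih, sw_length h]; ring

lemma it_infix (ζ : Bool → List Bool) (k : ℕ) {u v : List Bool} (h : u <:+: v) :
    (substWord ζ)^[k] u <:+: (substWord ζ)^[k] v := by
  obtain ⟨s, t, rfl⟩ := h
  rw [it_append, it_append]
  exact ⟨_, _, rfl⟩

lemma it_drop {ζ : Bool → List Bool} {q : ℕ} (h : ∀ a, (ζ a).length = q) (k i : ℕ)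
    (v : List Bool) (hi : i ≤ v.length) :
    (substWord ζ)^[k] (v.drop i) = ((substWord ζ)^[k] v).drop (q ^ k * i) := by
  conv_rhs => rw [← List.take_append_drop i v, it_append]
  have : q ^ k * i = ((substWord ζ)^[k] (v.take i)).length := by
    rw [it_length h, List.length_take, min_eq_left hi]
  rw [this, List.drop_left]

lemma it_take {ζ : Bool → List Bool} {q : ℕ} (h : ∀ a, (ζ a).length = q) (k i : ℕ)
    (v : List Bool) :
    (substWord ζ)^[k] (v.take i) = ((substWord ζ)^[k] v).take (q ^ k * i) := by
  rcases le_total i v.length with hi | hi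
  · conv_rhs => rw [← List.take_append_drop i v, it_append]
    have : q ^ k * i = ((substWord ζ)^[k] (v.take i)).length := by
      rw [it_length h, List.length_take, min_eq_left hi]
    rw [this, List.take_left]
  · rw [List.take_of_length_le hi, List.take_of_length_le]
    rw [it_length h]; exact Nat.mul_le_mul_left _ hi

lemma infix_take_drop {w V : List Bool} (h : w <:+: V) :
    ∃ p, p + w.length ≤ V.length ∧ w = (V.drop p).take w.length := by
  obtain ⟨s, t, rfl⟩ := h
  refine ⟨s.length, by simp, by simp⟩

lemma take_drop_infix (V : List Bool) (p n : ℕ) : (V.drop p).take n <:+: V :=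
  (List.take_prefix _ _).isInfix.trans (List.drop_suffix _ _).isInfix

lemma lang_infix {ζ : Bool → List Bool} {u v : List Bool} (h : u <:+: v)
    (hv : v ∈ substLang ζ) : u ∈ substLang ζ := by
  obtain ⟨a, k, hk, hv⟩ := hv
  exact ⟨a, k, hk, h.trans hv⟩

lemma lang_all {ζ : Bool → List Bool} {q : ℕ} (hζ : IsConstLenSubst ζ q)
    (hprim : IsPrimitive ζ) {w : List Bool} (hw : w ∈ substLang ζ) :
    ∃ k0, ∀ k, k0 ≤ k → ∀ e, w <:+: (substWord ζ)^[k] [e] := by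
  obtain ⟨a, k, hk, hw⟩ := hw
  obtain ⟨K, hK, hp⟩ := hprim
  have key : ∀ e, w <:+: (substWord ζ)^[k + K] [e] := by
    intro e
    rw [Function.iterate_add_apply]
    refine hw.trans (it_infix ζ k ?_)
    obtain ⟨s, t, h⟩ := List.append_of_mem (hp e a)
    rw [h]
    exact ⟨s, t, by simp⟩
  refine ⟨k + K, fun j hj e => ?_⟩
  obtain ⟨d, rfl⟩ := Nat.exists_eq_add_of_le hj
  rw [Function.iterate_add_apply]
  have hl : 1 ≤ ((substWord ζ)^[d] [e]).length := by
    rw [it_length hζ.2]; simp; exact Nat.pow_pos (by have := hζ.1; omega)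
  obtain ⟨e', t, h⟩ : ∃ e' t, (substWord ζ)^[d] [e] = e' :: t := by
    cases h : (substWord ζ)^[d] [e] with
    | nil => simp [h] at hl
    | cons e' t => exact ⟨e', t, rfl⟩
  rw [h]
  exact (key e').trans (it_infix ζ _ ⟨[], t, by simp⟩)

lemma short_all {ζ : Bool → List Bool} {q : ℕ} (hζ : IsConstLenSubst ζ q)
    (hprim : IsPrimitive ζ) :
    ∃ K, ∀ w ∈ substLang ζ, w.length ≤ 2 → ∀ e, w <:+: (substWord ζ)^[K] [e] := by
  choose f hf using fun (w : substLang ζ) => lang_all hζ hprim w.2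
  classical
  let g : List Bool → ℕ := fun w => if h : w ∈ substLang ζ then f ⟨w, h⟩ else 0
  have hfin := List.finite_length_le Bool 2
  refine ⟨hfin.toFinset.sup g, fun w hw hl e => ?_⟩
  refine hf ⟨w, hw⟩ _ ?_ e
  have : g w ≤ hfin.toFinset.sup g := Finset.le_sup (by simpa using hl)
  simpa [g, hw] using this

lemma cover {ζ : Bool → List Bool} {q : ℕ} (hζ : IsConstLenSubst ζ q)
    (hprim : IsPrimitive ζ) {w : List Bool} (hw : w ∈ substLang ζ) (k : ℕ)
    (hk : w.length ≤ q ^ k) :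
    ∃ u ∈ substLang ζ, u.length ≤ 2 ∧ w <:+: (substWord ζ)^[k] u := by
  obtain ⟨k0, h0⟩ := lang_all hζ hprim hw
  have hq : 0 < q ^ k := Nat.pow_pos (by have := hζ.1; omega)
  have h1 := h0 (k + (k0 + 1)) (by omega) true
  rw [Function.iterate_add_apply] at h1
  set v := (substWord ζ)^[k0+1] [true] with hv
  obtain ⟨p, hp, hw'⟩ := infix_take_drop h1
  have hvl : v ∈ substLang ζ := ⟨true, k0+1, by omega, by rw [hv]⟩
  rw [it_length hζ.2] at hp
  have hpm := Nat.div_add_mod p (q ^ k)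
  have hr := Nat.mod_lt p hq
  obtain ⟨r, hrd⟩ : ∃ r, r = p % q ^ k := ⟨_, rfl⟩
  rw [← hrd] at hpm hr
  have hi : p / q ^ k ≤ v.length := by
    by_contra hc
    push Not at hc
    have : q ^ k * v.length ≤ q ^ k * (p / q ^ k) := Nat.mul_le_mul_left _ hc.le
    have h3 : q ^ k * (v.length + 1) ≤ q ^ k * (p / q ^ k) := Nat.mul_le_mul_left _ hc
    rw [mul_add] at h3
    omega
  refine ⟨(v.drop (p / q ^ k)).take 2, lang_infix (take_drop_infix _ _ _) hvl, by simp, ?_⟩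
  rw [it_take hζ.2, it_drop hζ.2 _ _ _ hi]
  have : w = ((((substWord ζ)^[k] v).drop (q ^ k * (p / q ^ k))).take (q ^ k * 2)
      |>.drop r).take w.length := by
    rw [List.drop_take, List.drop_drop, List.take_take, hpm, min_eq_left (by omega)]
    exact hw'
  rw [this]
  exact take_drop_infix _ _ _

lemma contain {ζ : Bool → List Bool} {q : ℕ} (hζ : IsConstLenSubst ζ q)
    (hprim : IsPrimitive ζ) {W : List Bool} (hW : W ∈ substLang ζ) (k : ℕ)
    (hk : 2 * q ^ k ≤ W.length) :
    ∃ e, (substWord ζ)^[k] [e] <:+: W := by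
  obtain ⟨k0, h0⟩ := lang_all hζ hprim hW
  have hq : 0 < q ^ k := Nat.pow_pos (by have := hζ.1; omega)
  have h1 := h0 (k + (k0 + 1)) (by omega) true
  rw [Function.iterate_add_apply] at h1
  set v := (substWord ζ)^[k0+1] [true] with hv
  obtain ⟨p, hp, hw'⟩ := infix_take_drop h1
  rw [it_length hζ.2] at hp
  have hpm := Nat.div_add_mod p (q ^ k)
  have hr := Nat.mod_lt p hq
  obtain ⟨r, hrd⟩ : ∃ r, r = p % q ^ k := ⟨_, rfl⟩
  rw [← hrd] at hpm hr
  set i := p / q ^ k + 1 with hidef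
  have hmul : q ^ k * i = q ^ k * (p / q ^ k) + q ^ k := by rw [hidef]; ring
  have hi : i < v.length := by
    have : q ^ k * i < q ^ k * v.length := by omega
    exact lt_of_mul_lt_mul_left' this
  refine ⟨v[i], ?_⟩
  have h2 : [v[i]] = (v.drop i).take 1 := by
    rw [List.drop_eq_getElem_cons hi]; rfl
  rw [h2, it_take hζ.2, it_drop hζ.2 _ _ _ hi.le]
  have : (((substWord ζ)^[k] v).drop (q ^ k * i)).take (q ^ k * 1)
      = (W.drop (q ^ k * i - p)).take (q ^ k) := by
    conv_rhs => rw [hw']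
    rw [List.drop_take, List.drop_drop, List.take_take, min_eq_left (by omega)]
    rw [mul_one]; congr 2; omega
  rw [this]
  exact take_drop_infix _ _ _

lemma lin_rec {ζ : Bool → List Bool} {q : ℕ} (hζ : IsConstLenSubst ζ q)
    (hprim : IsPrimitive ζ) :
    ∃ R, ∀ w ∈ substLang ζ, ∀ W ∈ substLang ζ, 1 ≤ w.length → R * w.length ≤ W.length →
      w <:+: W := by
  obtain ⟨K, hK⟩ := short_all hζ hprim
  refine ⟨2 * q ^ (K + 1), fun w hw W hW h1 hl => ?_⟩
  have hq := hζ.1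
  have hk1 : w.length ≤ q ^ (Nat.clog q w.length) := Nat.le_pow_clog (by omega) _
  have hk2 : q ^ (Nat.clog q w.length) ≤ q * w.length := by
    rcases Nat.lt_or_ge 1 w.length with h | h
    · have h3 := Nat.pow_pred_clog_lt_self (b := q) (by omega) h
      have h4 : 0 < Nat.clog q w.length := Nat.clog_pos (by omega) h
      obtain ⟨c, hc⟩ := Nat.exists_eq_succ_of_ne_zero h4.ne'
      rw [hc] at h3 ⊢
      simp only [Nat.pred_succ, Nat.succ_eq_add_one] at h3 ⊢
      rw [pow_succ, mul_comm]
      exact Nat.mul_le_mul_left _ h3.le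
    · have : w.length = 1 := by omega
      rw [this]; simp; omega
  obtain ⟨u, hu, hul, hwu⟩ := cover hζ hprim hw _ hk1
  obtain ⟨e, he⟩ := contain hζ hprim hW (Nat.clog q w.length + K) (by
    refine le_trans ?_ hl
    calc 2 * q ^ (Nat.clog q w.length + K) = 2 * q ^ K * q ^ (Nat.clog q w.length) := by ring
      _ ≤ 2 * q ^ K * (q * w.length) := Nat.mul_le_mul_left _ hk2
      _ = _ := by ring)
  refine hwu.trans (List.IsInfix.trans ?_ he)
  · rw [Function.iterate_add_apply]
    exact it_infix ζ _ (hK u hu hul e)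

lemma window_lang {ζ : Bool → List Bool} {x : ℕ → Bool} (hx : x ∈ SubstShift ζ) (i n : ℕ) :
    (List.ofFn fun t : Fin n => x (i + (t : ℕ))) ∈ substLang ζ := by
  refine lang_infix ?_ (hx (i + n))
  have : (List.ofFn fun t : Fin n => x (i + (t : ℕ))) =
      ((List.ofFn fun t : Fin (i + n) => x (t : ℕ)).drop i).take n := by
    apply List.ext_getElem
    · simp
    · intro a h1 h2
      simp
  rw [this]
  exact take_drop_infix _ _ _

lemma lin_rec_seq {ζ : Bool → List Bool} {q : ℕ} (hζ : IsConstLenSubst ζ q)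
    (hprim : IsPrimitive ζ) :
    ∃ R, ∀ x ∈ SubstShift ζ, ∀ x' ∈ SubstShift ζ, ∀ i j n, ∃ t, j ≤ t ∧ t ≤ j + R * n ∧
      ∀ h, h < n → x (i + h) = x' (t + h) := by
  obtain ⟨R, hR⟩ := lin_rec hζ hprim
  refine ⟨R, fun x hx x' hx' i j n => ?_⟩
  rcases Nat.eq_zero_or_pos n with rfl | hn
  · exact ⟨j, le_rfl, by omega, fun h hh => by omega⟩
  have := hR _ (window_lang hx i n) _ (window_lang hx' j (R * n)) (by rw [List.length_ofFn]; exact hn) (by simp)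
  obtain ⟨p, hp, hw⟩ := infix_take_drop this
  simp only [List.length_ofFn] at hp hw
  refine ⟨j + p, by omega, by omega, fun h hh => ?_⟩
  have h3 := congrArg (fun l => l[h]?) hw
  have h4 : p + h < R * n := by omega
  simp [hh, h4] at h3
  rw [h3, add_assoc]

lemma no_return {ζ : Bool → List Bool} {q : ℕ} (hζ : IsConstLenSubst ζ q)
    (hprim : IsPrimitive ζ) (hap : IsAperiodic ζ) {y : ℕ → Bool} (hy : y ∈ SubstShift ζ)
    (M : ℕ) : ∃ L0, ∀ L, L0 ≤ L → ∀ i p, 1 ≤ p → p ≤ M → ¬ agree y L i (i + p) := by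
  obtain ⟨R, hR⟩ := lin_rec_seq hζ hprim
  obtain ⟨x, hx, hxp⟩ := hap
  refine ⟨R * (M + 1) + 1, fun L hL i p hp hpM hag => ?_⟩
  obtain ⟨i0, hi0⟩ := hxp p hp
  obtain ⟨t, h1, h2, h3⟩ := hR x hx y hy i0 i (p + 1)
  have h4 := h3 0 (by omega)
  have h5 := h3 p (by omega)
  have h6 : R * (p + 1) ≤ R * (M + 1) := Nat.mul_le_mul_left _ (by omega)
  have h7 := hag (t - i) (by omega)
  rw [show i + (t - i) = t by omega, show i + p + (t - i) = t + p by omega] at h7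
  simp only [add_zero] at h4
  exact hi0 (by rw [h5, h4, h7])

end RQAaux
namespace RQAaux

lemma freq_exists (f : ℕ → ℝ) (hf0 : ∀ i, 0 ≤ f i) (hf1 : ∀ i, f i ≤ 1) (R L : ℕ)
    (hrec : ∀ i j n, ∃ t, j ≤ t ∧ t ≤ j + R * (n + L) ∧ ∀ h, h < n → f (i + h) = f (t + h)) :
    ∃ s : ℝ, Tendsto (fun n : ℕ => (∑ h ∈ Finset.range n, f h) / (n : ℝ)) atTop (𝓝 s) := by
  set S : ℕ → ℕ → ℝ := fun i n => ∑ h ∈ Finset.range n, f (i + h) with hS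
  have hSadd : ∀ i a b, S i (a + b) = S i a + S (i + a) b := by
    intro i a b
    simp only [hS]
    rw [Finset.sum_range_add]
    simp only [add_assoc]
  have hS0 : ∀ i n, 0 ≤ S i n := fun i n => Finset.sum_nonneg fun h _ => hf0 _
  have hS1 : ∀ i n, S i n ≤ n := fun i n => by
    calc S i n ≤ ∑ h ∈ Finset.range n, (1 : ℝ) := Finset.sum_le_sum fun h _ => hf1 _
      _ = n := by simp
  set u : ℕ → ℝ := fun n => ⨆ i, S i n with hu
  have hbdd : ∀ n, BddAbove (Set.range fun i => S i n) := fun n =>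
    ⟨n, by rintro _ ⟨i, rfl⟩; exact hS1 i n⟩
  have hSu : ∀ i n, S i n ≤ u n := fun i n => le_ciSup (hbdd n) i
  have hu0 : ∀ n, 0 ≤ u n := fun n => (hS0 0 n).trans (hSu 0 n)
  have hu1 : ∀ n, u n ≤ n := fun n => ciSup_le fun i => hS1 i n
  have hsub : Subadditive u := by
    intro a b
    refine ciSup_le fun i => ?_
    rw [hSadd]
    exact add_le_add (hSu _ _) (hSu _ _)
  have hbelow : BddBelow (Set.range fun n => u n / n) :=
    ⟨0, by rintro _ ⟨n, rfl⟩; exact div_nonneg (hu0 n) (Nat.cast_nonneg n)⟩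
  have hlim := hsub.tendsto_lim hbelow
  set s := hsub.lim with hs
  have hs0 : 0 ≤ s := ge_of_tendsto' hlim fun n => div_nonneg (hu0 n) (Nat.cast_nonneg n)
  have hsu : ∀ n : ℕ, s * n ≤ u n := by
    intro n
    rcases Nat.eq_zero_or_pos n with rfl | hn
    · simpa using hu0 0
    · have := hsub.lim_le_div hbelow hn.ne'
      rwa [le_div_iff₀ (by exact_mod_cast hn)] at this
  have hSz : ∀ n, ∑ h ∈ Finset.range n, f h = S 0 n := fun n => by simp [hS]
  refine ⟨s, ?_⟩
  simp only [hSz]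
  rw [tendsto_order]
  constructor
  · intro a ha
    set ε : ℝ := (s - a) / (2 * (R + 1)) with hε
    have hεpos : 0 < ε := div_pos (by linarith) (by positivity)
    obtain ⟨k0, hk0⟩ := eventually_atTop.1 ((tendsto_order.1 hlim).2 (s + ε) (by linarith))
    have huk : ∀ k : ℕ, u k ≤ (s + ε) * k + k0 := by
      intro k
      rcases lt_or_ge k k0 with h | h
      · have h1 := hu1 k
        have h2 : (k : ℝ) ≤ k0 := by exact_mod_cast h.le
        have : 0 ≤ (s + ε) * k := by positivity
        linarith
      · rcases Nat.eq_zero_or_pos k with rfl | hk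
        · have := hu1 0
          have h2 : (0 : ℝ) ≤ k0 := Nat.cast_nonneg _
          simp at this ⊢; linarith
        · have := hk0 k h
          rw [div_lt_iff₀ (by exact_mod_cast hk)] at this
          have h2 : (0 : ℝ) ≤ k0 := Nat.cast_nonneg _
          linarith
    have hlow : ∀ n : ℕ, s * n - ε * (R * (n + L)) - 2 * k0 ≤ S 0 n := by
      intro n
      set N := R * (n + L) + n with hN
      have h1 : u N ≤ S 0 n + (s + ε) * (R * (n + L)) + 2 * k0 := by
        refine ciSup_le fun i => ?_
        obtain ⟨t, ht1, ht2, ht3⟩ := hrec 0 i n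
        obtain ⟨d, rfl⟩ := Nat.exists_eq_add_of_le ht1
        obtain ⟨e, he⟩ : ∃ e, R * (n + L) = d + e := ⟨R * (n + L) - d, by omega⟩
        have hNe : N = d + n + e := by omega
        have hmid : S (i + d) n = S 0 n := by
          refine Finset.sum_congr rfl fun h hh => ?_
          exact (ht3 h (Finset.mem_range.1 hh)).symm
        rw [hNe, hSadd, hSadd, hmid]
        have h2 := (hSu i d).trans (huk d)
        have h3 := (hSu (i + (d + n)) e).trans (huk e)
        have h4 : (R : ℝ) * (n + L) = d + e := by exact_mod_cast he
        rw [h4]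
        linarith
      have h2 := hsu N
      have h3 : (N : ℝ) = R * (n + L) + n := by rw [hN]; push_cast; ring
      rw [h3] at h2
      linarith
    obtain ⟨n0, hn0⟩ := exists_nat_gt (2 * (ε * (R * L) + 2 * k0) / (s - a))
    filter_upwards [eventually_ge_atTop (n0 + 1)] with n hn
    have hnpos : (0 : ℝ) < n := by exact_mod_cast (by omega : 0 < n)
    rw [lt_div_iff₀ hnpos]
    have h5 := hlow n
    have h6 : (n0 : ℝ) < n := by exact_mod_cast (by omega : n0 < n)
    have hsa : 0 < s - a := by linarith
    have h7 : 2 * (ε * (R * L) + 2 * k0) < n * (s - a) := by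
      rw [div_lt_iff₀ hsa] at hn0
      nlinarith
    have h8 : ε * (2 * (R + 1)) = s - a := by
      rw [hε]; field_simp
    have h9 : ε * R * n ≤ (s - a) / 2 * n := by
      apply mul_le_mul_of_nonneg_right _ hnpos.le
      linarith
    nlinarith
  · intro a ha
    filter_upwards [(tendsto_order.1 hlim).2 a ha] with n hn
    exact lt_of_le_of_lt (div_le_div_of_nonneg_right (hSu 0 n) (Nat.cast_nonneg n)) hn

/-- window word -/
def wd (y : ℕ → Bool) (L i : ℕ) : Fin L → Bool := fun t => y (i + (t : ℕ))

lemma agree_iff (y : ℕ → Bool) (L i j : ℕ) : agree y L i j ↔ wd y L i = wd y L j := by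
  constructor
  · intro h; funext t; exact h t t.2
  · intro h t ht; exact congrFun h ⟨t, ht⟩

/-- counting function of a word -/
def cnt (y : ℕ → Bool) (L : ℕ) (u : Fin L → Bool) (n : ℕ) : ℕ :=
  ((Finset.range n).filter fun i => wd y L i = u).card

/-- number of recurrences -/
def AA (y : ℕ → Bool) (L n : ℕ) : ℕ :=
  ((Finset.range n ×ˢ Finset.range n).filter fun p => wd y L p.1 = wd y L p.2).card

lemma AA_eq (y : ℕ → Bool) (L n : ℕ) : AA y L n = ∑ u : Fin L → Bool, cnt y L u n ^ 2 := by
  unfold AA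
  rw [Finset.card_eq_sum_card_fiberwise (f := fun p => wd y L p.1) (t := Finset.univ)
    (fun _ _ => Finset.mem_coe.2 (Finset.mem_univ _))]
  refine Finset.sum_congr rfl fun u _ => ?_
  rw [sq, cnt, ← Finset.card_product]
  congr 1
  ext p
  simp only [Finset.mem_filter, Finset.mem_product]
  constructor
  · rintro ⟨⟨⟨h1, h2⟩, h3⟩, h4⟩; exact ⟨⟨h1, h4⟩, h2, h3 ▸ h4⟩
  · rintro ⟨⟨h1, h2⟩, h3, h4⟩; exact ⟨⟨⟨h1, h3⟩, h2.trans h4.symm⟩, h2⟩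

lemma cnt_sum (y : ℕ → Bool) (L n : ℕ) : ∑ u : Fin L → Bool, cnt y L u n = n := by
  have := Finset.card_eq_sum_card_fiberwise (f := fun i => wd y L i) (s := Finset.range n)
    (t := Finset.univ) (fun _ _ => Finset.mem_coe.2 (Finset.mem_univ _))
  rw [Finset.card_range] at this
  exact this.symm

/-- linear recurrence of a single sequence -/
def LinRec (y : ℕ → Bool) (R : ℕ) : Prop :=
  ∀ i j n, ∃ t, j ≤ t ∧ t ≤ j + R * n ∧ ∀ h, h < n → y (i + h) = y (t + h)

lemma cnt_freq {y : ℕ → Bool} {R : ℕ} (hR : LinRec y R) (L : ℕ) (u : Fin L → Bool) :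
    ∃ s : ℝ, Tendsto (fun n : ℕ => (cnt y L u n : ℝ) / (n : ℝ)) atTop (𝓝 s) := by
  obtain ⟨s, hs⟩ := freq_exists (fun i => if wd y L i = u then 1 else 0)
    (fun i => by split_ifs <;> norm_num) (fun i => by split_ifs <;> norm_num) R L (by
      intro i j n
      obtain ⟨t, h1, h2, h3⟩ := hR i j (n + L)
      refine ⟨t, h1, h2, fun h hh => ?_⟩
      have : wd y L (i + h) = wd y L (t + h) := by
        funext k
        have := h3 (h + k) (by have := k.2; omega)
        simpa [wd, add_assoc] using this
      simp only [this])
  refine ⟨s, ?_⟩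
  simpa [cnt] using hs

/-- the facts about the correlation limit -/
lemma corr_exists {y : ℕ → Bool} {R : ℕ} (hR : LinRec y R)
    (hnr : ∀ M, ∃ L0, ∀ L, L0 ≤ L → ∀ i p, 1 ≤ p → p ≤ M → ¬ agree y L i (i + p)) :
    ∃ c : ℕ → ℝ, (∀ L, Tendsto (fun n : ℕ => (AA y L n : ℝ) / (n : ℝ) ^ 2) atTop (𝓝 (c L))) ∧
      (∀ L : ℕ, 1 ≤ c L * (R * L + 1)) ∧ Tendsto c atTop (𝓝 0) := by
  choose μ hμ using fun L (u : Fin L → Bool) => cnt_freq hR L u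
  have hμ0 : ∀ L u, 0 ≤ μ L u := fun L u => ge_of_tendsto' (hμ L u) fun n => by positivity
  have hμs : ∀ L, ∑ u, μ L u = 1 := by
    intro L
    have h1 := tendsto_finsetSum (Finset.univ) (fun u _ => hμ L u)
    refine tendsto_nhds_unique h1 ?_
    refine tendsto_const_nhds.congr' ?_
    filter_upwards [eventually_gt_atTop 0] with n hn
    rw [← Finset.sum_div, ← Nat.cast_sum, cnt_sum, div_self]
    exact_mod_cast hn.ne'
  refine ⟨fun L => ∑ u, μ L u ^ 2, ?_, ?_, ?_⟩
  · intro L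
    have h1 := tendsto_finsetSum (Finset.univ) (fun u _ => (hμ L u).pow 2)
    refine h1.congr fun n => ?_
    rw [AA_eq]
    push_cast
    rw [Finset.sum_div]
    simp only [div_pow]
  · intro L
    set T := (Finset.range (R * L + 1)).image (wd y L) with hT
    have hz : ∀ u, u ∉ T → μ L u = 0 := by
      intro u hu
      refine tendsto_nhds_unique (hμ L u) ?_
      have : ∀ n, cnt y L u n = 0 := by
        intro n
        rw [cnt, Finset.card_eq_zero, Finset.filter_eq_empty_iff]
        intro i _ hi
        apply hu
        obtain ⟨t, h1, h2, h3⟩ := hR i 0 L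
        rw [hT, Finset.mem_image]
        refine ⟨t, Finset.mem_range.2 (by omega), ?_⟩
        rw [← hi]
        exact ((agree_iff y L i t).1 h3).symm
      simp [this]
    have h1 : ∑ u ∈ T, μ L u = 1 := by
      rw [← hμs L]
      exact Finset.sum_subset (Finset.subset_univ _) fun u _ hu => hz u hu
    have h2 := sq_sum_le_card_mul_sum_sq (s := T) (f := μ L)
    rw [h1] at h2
    have h3 : ∑ u ∈ T, μ L u ^ 2 ≤ ∑ u, μ L u ^ 2 :=
      Finset.sum_le_sum_of_subset_of_nonneg (Finset.subset_univ _) fun _ _ _ => sq_nonneg _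
    have h4 : (T.card : ℝ) ≤ R * L + 1 := by
      have : T.card ≤ R * L + 1 := Finset.card_image_le.trans (by simp)
      exact_mod_cast this
    calc (1 : ℝ) = 1 ^ 2 := by norm_num
      _ ≤ T.card * ∑ u ∈ T, μ L u ^ 2 := h2
      _ ≤ (R * L + 1) * ∑ u, μ L u ^ 2 := by
        apply mul_le_mul h4 h3 (Finset.sum_nonneg fun _ _ => sq_nonneg _) (by positivity)
      _ = _ := mul_comm _ _
  · have hbound : ∀ M : ℕ, 0 < M → ∀ᶠ L in atTop, ∑ u, μ L u ^ 2 ≤ 1 / (M : ℝ) := by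
      intro M hM
      obtain ⟨L0, hL0⟩ := hnr M
      filter_upwards [eventually_ge_atTop L0] with L hL
      have hMr : (0 : ℝ) < M := by exact_mod_cast hM
      have hle : ∀ u, μ L u ≤ 1 / (M : ℝ) := by
        intro u
        have hc : ∀ n, cnt y L u n ≤ n / M + 1 := by
          intro n
          rw [cnt, ← Finset.card_range (n / M + 1)]
          refine Finset.card_le_card_of_injOn (fun i => i / M) ?_ ?_
          · intro i hi
            simp only [Finset.coe_filter, Finset.mem_range, Set.mem_ofPred_eq] at hi
            simp only [Finset.coe_range, Set.mem_Iio]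
            have := Nat.div_le_div_right (c := M) hi.1.le
            omega
          · have key : ∀ i j, wd y L i = u → wd y L j = u → i / M = j / M → ¬ i < j := by
              intro i j hi hj hij hlt
              have h1 := Nat.div_add_mod i M
              have h2 := Nat.div_add_mod j M
              have h3 := Nat.mod_lt i hM
              have h4 := Nat.mod_lt j hM
              rw [hij] at h1
              refine hL0 L hL i (j - i) (by omega) (by omega) ?_
              rw [agree_iff, show i + (j - i) = j by omega, hi, hj]
            intro i hi j hj hij
            simp only [Finset.coe_filter, Finset.mem_range, Set.mem_ofPred_eq] at hi hj
            have k1 := key i j hi.2 hj.2 hij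
            have k2 := key j i hj.2 hi.2 hij.symm
            omega
        have h1 : Tendsto (fun n : ℕ => 1 / (M : ℝ) + 1 / (n : ℝ)) atTop (𝓝 (1 / (M : ℝ) + 0)) :=
          tendsto_const_nhds.add tendsto_one_div_atTop_nhds_zero_nat
        rw [add_zero] at h1
        refine le_of_tendsto_of_tendsto (hμ L u) h1 ?_
        filter_upwards [eventually_gt_atTop 0] with n hn
        have hnr : (0 : ℝ) < n := by exact_mod_cast hn
        rw [div_le_iff₀ hnr]
        have h2 : (cnt y L u n : ℝ) ≤ ((n / M : ℕ) : ℝ) + 1 := by exact_mod_cast hc n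
        have h3 : ((n / M : ℕ) : ℝ) ≤ n / M := Nat.cast_div_le
        have h4 : (1 / (M : ℝ) + 1 / (n : ℝ)) * n = n / M + 1 := by field_simp
        linarith
      calc ∑ u, μ L u ^ 2 ≤ ∑ u, (1 / (M : ℝ)) * μ L u := by
            refine Finset.sum_le_sum fun u _ => ?_
            rw [sq]
            exact mul_le_mul_of_nonneg_right (hle u) (hμ0 L u)
        _ = 1 / (M : ℝ) := by rw [← Finset.mul_sum, hμs, mul_one]
    rw [tendsto_order]
    constructor
    · intro a ha
      exact Eventually.of_forall fun L =>
        lt_of_lt_of_le ha (Finset.sum_nonneg fun _ _ => sq_nonneg _)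
    · intro a ha
      obtain ⟨M, hM⟩ := exists_nat_one_div_lt ha
      filter_upwards [hbound (M + 1) (by omega)] with L hL
      refine lt_of_le_of_lt hL ?_
      push_cast
      exact hM

lemma tendsto_succ_ratio {f : ℕ → ℝ} {a : ℝ}
    (hf : Tendsto (fun n : ℕ => f n / (n : ℝ) ^ 2) atTop (𝓝 a)) :
    Tendsto (fun n : ℕ => f (n + 1) / (n : ℝ) ^ 2) atTop (𝓝 a) := by
  have h1 := hf.comp (tendsto_add_atTop_nat 1)
  have h2 : Tendsto (fun n : ℕ => (1 + 1 / (n : ℝ)) ^ 2) atTop (𝓝 ((1 + 0) ^ 2)) :=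
    (tendsto_const_nhds.add tendsto_one_div_atTop_nhds_zero_nat).pow 2
  have h3 := h1.mul h2
  norm_num at h3
  refine h3.congr' ?_
  filter_upwards [eventually_gt_atTop 0] with n hn
  have hnr : (0 : ℝ) < n := by exact_mod_cast hn
  field_simp

lemma AA_mono (y : ℕ → Bool) (L n : ℕ) : AA y (L + 1) n ≤ AA y L n := by
  refine Finset.card_le_card fun p hp => ?_
  simp only [Finset.mem_filter, ← agree_iff] at hp ⊢
  exact ⟨hp.1, fun t ht => hp.2 t (by omega)⟩

lemma AA_diff (y : ℕ → Bool) (L n : ℕ) :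
    AA y L n = AA y (L + 1) n + ((Finset.range n ×ˢ Finset.range n).filter fun p =>
      wd y L p.1 = wd y L p.2 ∧ y (p.1 + L) ≠ y (p.2 + L)).card := by
  unfold AA
  rw [← Finset.card_union_of_disjoint]
  · congr 1
    ext p
    simp only [Finset.mem_filter, Finset.mem_union, ← agree_iff]
    constructor
    · rintro ⟨h1, h2⟩
      by_cases h : y (p.1 + L) = y (p.2 + L)
      · left
        refine ⟨h1, fun t ht => ?_⟩
        rcases Nat.lt_succ_iff_lt_or_eq.1 ht with h' | rfl
        · exact h2 t h'
        · exact h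
      · exact Or.inr ⟨h1, h2, h⟩
    · rintro (⟨h1, h2⟩ | ⟨h1, h2, h3⟩)
      · exact ⟨h1, fun t ht => h2 t (by omega)⟩
      · exact ⟨h1, h2⟩
  · rw [Finset.disjoint_filter]
    intro p _ h1 h2
    rw [← agree_iff] at h1
    exact h2.2 (h1 L (by omega))

lemma AA_convex (y : ℕ → Bool) (L n : ℕ) :
    AA y (L + 1) n + AA y (L + 1) (n + 1) ≤ AA y (L + 2) n + AA y L (n + 1) := by
  have h1 := AA_diff y L (n + 1)
  have h2 := AA_diff y (L + 1) n
  rw [show L + 1 + 1 = L + 2 from rfl] at h2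
  have h3 : ((Finset.range n ×ˢ Finset.range n).filter fun p =>
      wd y (L + 1) p.1 = wd y (L + 1) p.2 ∧ y (p.1 + (L + 1)) ≠ y (p.2 + (L + 1))).card ≤
      ((Finset.range (n + 1) ×ˢ Finset.range (n + 1)).filter fun p =>
      wd y L p.1 = wd y L p.2 ∧ y (p.1 + L) ≠ y (p.2 + L)).card := by
    refine Finset.card_le_card_of_injOn (fun p => (p.1 + 1, p.2 + 1)) ?_ ?_
    · intro p hp
      simp only [Finset.coe_filter, Finset.mem_product, Finset.mem_range, Set.mem_ofPred_eq,
        ← agree_iff] at hp ⊢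
      obtain ⟨⟨h1, h2⟩, h3, h4⟩ := hp
      refine ⟨⟨by omega, by omega⟩, fun t ht => ?_, ?_⟩
      · have := h3 (t + 1) (by omega)
        rwa [show p.1 + (t + 1) = p.1 + 1 + t by ring, show p.2 + (t + 1) = p.2 + 1 + t by ring]
          at this
      · rwa [show p.1 + 1 + L = p.1 + (L + 1) by ring, show p.2 + 1 + L = p.2 + (L + 1) by ring]
    · intro p _ p' _ h
      simp only [Prod.mk.injEq] at h
      ext <;> omega
  omega

lemma ratio_c {c : ℕ → ℝ} (C : ℝ) (hC : 0 < C) (hanti : ∀ L, c (L + 1) ≤ c L)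
    (hconv : ∀ L, c (L + 1) - c (L + 2) ≤ c L - c (L + 1))
    (hlow : ∀ L : ℕ, 1 ≤ c L * (C * L + 1)) (h0 : Tendsto c atTop (𝓝 0)) :
    Tendsto (fun L => c (L + 1) / c L) atTop (𝓝 1) := by
  have hpos : ∀ L, 0 < c L := fun L => by
    have h1 := hlow L
    have h2 : 0 < C * L + 1 := by positivity
    by_contra h
    push Not at h
    have := mul_nonpos_of_nonpos_of_nonneg h h2.le
    linarith
  have hD : Antitone fun L => c L - c (L + 1) := antitone_nat_of_succ_le hconv
  have hsum : ∀ a b : ℕ, (b : ℝ) * (c (a + b) - c (a + b + 1)) ≤ c a - c (a + b) := by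
    intro a b
    calc (b : ℝ) * (c (a + b) - c (a + b + 1))
        = ∑ k ∈ Finset.range b, (c (a + b) - c (a + b + 1)) := by
          rw [Finset.sum_const, Finset.card_range, nsmul_eq_mul]
      _ ≤ ∑ k ∈ Finset.range b, (c (a + k) - c (a + (k + 1))) := by
        refine Finset.sum_le_sum fun k hk => ?_
        exact hD (show a + k ≤ a + b by have := Finset.mem_range.1 hk; omega)
      _ = c a - c (a + b) := by
        rw [Finset.sum_range_sub' (fun k => c (a + k))]; simp
  have hhalf : Tendsto (fun L : ℕ => L / 2) atTop atTop :=
    Nat.tendsto_div_const_atTop (by norm_num)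
  have hup : Tendsto (fun L : ℕ => 1 - 2 * (C + 1) * c (L / 2)) atTop (𝓝 (1 - 2 * (C + 1) * 0)) :=
    tendsto_const_nhds.sub ((h0.comp hhalf).const_mul _)
  rw [mul_zero, sub_zero] at hup
  refine tendsto_of_tendsto_of_tendsto_of_le_of_le' hup tendsto_const_nhds ?_ ?_
  · filter_upwards [eventually_ge_atTop 1] with L hL
    rw [le_div_iff₀ (hpos L)]
    have h1 := hsum (L / 2) (L - L / 2)
    rw [show L / 2 + (L - L / 2) = L by omega] at h1
    have h2 : (L : ℝ) / 2 ≤ ((L - L / 2 : ℕ) : ℝ) := by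
      have : L ≤ 2 * (L - L / 2) := by omega
      have : (L : ℝ) ≤ 2 * ((L - L / 2 : ℕ) : ℝ) := by exact_mod_cast this
      linarith
    have hD0 : 0 ≤ c L - c (L + 1) := by linarith [hanti L]
    have h3 : (L : ℝ) / 2 * (c L - c (L + 1)) ≤ c (L / 2) := by
      have := mul_le_mul_of_nonneg_right h2 hD0
      linarith [hpos L]
    have hL1 : (1 : ℝ) ≤ L := by exact_mod_cast hL
    have h4 : 1 ≤ c L * ((C + 1) * L) := by
      refine (hlow L).trans (mul_le_mul_of_nonneg_left ?_ (hpos L).le)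
      linarith
    have h5 : c L - c (L + 1) ≤ 2 * (C + 1) * c (L / 2) * c L := by
      calc c L - c (L + 1) = 1 * (c L - c (L + 1)) := by ring
        _ ≤ c L * ((C + 1) * L) * (c L - c (L + 1)) := mul_le_mul_of_nonneg_right h4 hD0
        _ = 2 * (C + 1) * c L * ((L : ℝ) / 2 * (c L - c (L + 1))) := by ring
        _ ≤ 2 * (C + 1) * c L * c (L / 2) :=
          mul_le_mul_of_nonneg_left h3 (by have := hpos L; positivity)
        _ = _ := by ring
    linarith
  · exact Eventually.of_forall fun L => (div_le_one (hpos L)).2 (hanti L)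

end RQAaux
namespace RQAaux

section lines
variable {X : Type*} (d : X → X → ℝ) (f : X → X) (x : X) (n : ℕ) (ε : ℝ)

/-- diagonal segments of length k -/
def Fs (k : ℕ) : Set (ℕ × ℕ) := {p | p.1 ≠ p.2 ∧ p.1 + k ≤ n ∧ p.2 + k ≤ n ∧
  ∀ h, h < k → RPone d f x ε (p.1 + h) (p.2 + h)}

/-- diagonal segments that cannot be extended to the left -/
def Gs (k : ℕ) : Set (ℕ × ℕ) := {p | p ∈ Fs d f x n ε k ∧
  (0 < p.1 → 0 < p.2 → ¬ RPone d f x ε (p.1 - 1) (p.2 - 1))}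

lemma Fs_finite (k : ℕ) : (Fs d f x n ε k).Finite := by
  refine (Set.finite_Iic (n, n)).subset fun p hp => ?_
  obtain ⟨_, h1, h2, _⟩ := hp
  exact ⟨by simp only; omega, by simp only; omega⟩

lemma Gs_finite (k : ℕ) : (Gs d f x n ε k).Finite :=
  (Fs_finite d f x n ε k).subset fun _ hp => hp.1

lemma Fs_card (k : ℕ) : (Fs d f x n ε k).ncard =
    (Gs d f x n ε k).ncard + (Fs d f x n ε (k + 1)).ncard := by
  have hinj : Function.Injective (fun p : ℕ × ℕ => (p.1 + 1, p.2 + 1)) := by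
    intro p p' h
    simp only [Prod.mk.injEq] at h
    ext <;> omega
  rw [← Set.ncard_image_of_injective (Fs d f x n ε (k + 1)) hinj,
    ← Set.ncard_union_eq _ (Gs_finite d f x n ε k) ((Fs_finite d f x n ε (k + 1)).image _)]
  · congr 1
    ext p
    constructor
    · intro hp
      by_cases h : 0 < p.1 ∧ 0 < p.2 ∧ RPone d f x ε (p.1 - 1) (p.2 - 1)
      · right
        obtain ⟨h1, h2, h3⟩ := h
        obtain ⟨a1, a2, a3, a4⟩ := hp
        refine ⟨(p.1 - 1, p.2 - 1), ⟨by simp only; omega, by simp only; omega,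
          by simp only; omega, fun t ht => ?_⟩, by ext <;> simp only <;> omega⟩
        rcases Nat.eq_zero_or_pos t with rfl | ht0
        · exact h3
        · have := a4 (t - 1) (by omega)
          simp only
          rwa [show p.1 - 1 + t = p.1 + (t - 1) by omega,
            show p.2 - 1 + t = p.2 + (t - 1) by omega]
      · left
        exact ⟨hp, fun h1 h2 h3 => h ⟨h1, h2, h3⟩⟩
    · rintro (hp | ⟨p', ⟨a1, a2, a3, a4⟩, rfl⟩)
      · exact hp.1
      · refine ⟨by simp only; omega, by simp only; omega, by simp only; omega, fun t ht => ?_⟩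
        have := a4 (t + 1) (by omega)
        simp only
        rwa [show p'.1 + 1 + t = p'.1 + (t + 1) by omega,
            show p'.2 + 1 + t = p'.2 + (t + 1) by omega]
  · rw [Set.disjoint_left]
    rintro _ hp ⟨p', ⟨a1, a2, a3, a4⟩, rfl⟩
    have := a4 0 (by omega)
    exact hp.2 (Nat.succ_pos _) (Nat.succ_pos _) this

lemma Gs_card (k : ℕ) (hk : 1 ≤ k) : (Gs d f x n ε k).ncard =
    Nlines d f x n ε k + (Gs d f x n ε (k + 1)).ncard := by
  have hsub : {p : ℕ × ℕ | IsLine d f x n ε p.1 p.2 k} ⊆ Gs d f x n ε k := by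
    rintro p ⟨h1, h2, h3, h4, h5, h6, h7⟩
    exact ⟨⟨h4, h2, h3, h5⟩, h6⟩
  unfold Nlines
  rw [← Set.ncard_union_eq _ ((Gs_finite d f x n ε k).subset hsub) (Gs_finite d f x n ε (k + 1))]
  · congr 1
    ext p
    constructor
    · rintro ⟨⟨h4, h2, h3, h5⟩, h6⟩
      by_cases h : max p.1 p.2 + k < n ∧ RPone d f x ε (p.1 + k) (p.2 + k)
      · right
        refine ⟨⟨h4, by omega, by omega, fun t ht => ?_⟩, h6⟩
        rcases Nat.lt_succ_iff_lt_or_eq.1 ht with h' | rfl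
        · exact h5 t h'
        · exact h.2
      · left
        exact ⟨hk, h2, h3, h4, h5, h6, fun h1 h2 => h ⟨h1, h2⟩⟩
    · rintro (hp | ⟨⟨h4, h2, h3, h5⟩, h6⟩)
      · exact hsub hp
      · exact ⟨⟨h4, by omega, by omega, fun t ht => h5 t (by omega)⟩, h6⟩
  · rw [Set.disjoint_left]
    rintro p ⟨h1, h2, h3, h4, h5, h6, h7⟩ ⟨⟨b4, b2, b3, b5⟩, b6⟩
    exact h7 (by omega) (b5 k (by omega))

lemma Fs_zero (k : ℕ) (hk : n < k) : (Fs d f x n ε k).ncard = 0 := by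
  rw [Set.ncard_eq_zero (Fs_finite d f x n ε k)]
  ext p
  simp only [Set.mem_empty_iff_false, iff_false]
  rintro ⟨_, h, _⟩
  omega

lemma N_eq (l : ℕ) (hl : 1 ≤ l) : (Nlines d f x n ε l : ℝ) =
    (Fs d f x n ε l).ncard - 2 * (Fs d f x n ε (l + 1)).ncard + (Fs d f x n ε (l + 2)).ncard := by
  have h1 := Fs_card d f x n ε l
  have h2 := Fs_card d f x n ε (l + 1)
  have h3 := Gs_card d f x n ε l hl
  rw [show l + 1 + 1 = l + 2 from rfl] at h2
  have h1' : ((Fs d f x n ε l).ncard : ℝ) =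
    (Gs d f x n ε l).ncard + (Fs d f x n ε (l + 1)).ncard := by exact_mod_cast h1
  have h2' : ((Fs d f x n ε (l + 1)).ncard : ℝ) =
    (Gs d f x n ε (l + 1)).ncard + (Fs d f x n ε (l + 2)).ncard := by exact_mod_cast h2
  have h3' : ((Gs d f x n ε l).ncard : ℝ) =
    Nlines d f x n ε l + (Gs d f x n ε (l + 1)).ncard := by exact_mod_cast h3
  linarith

lemma partial_sum (ℓ : ℕ) (hℓ : 1 ≤ ℓ) (K : ℕ) :
    ∑ k ∈ Finset.range K, ((ℓ + k : ℕ) : ℝ) * (Nlines d f x n ε (ℓ + k) : ℝ) =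
    ((ℓ : ℝ) * (Fs d f x n ε ℓ).ncard - ((ℓ : ℝ) - 1) * (Fs d f x n ε (ℓ + 1)).ncard) -
    (((ℓ + K : ℕ) : ℝ) * (Fs d f x n ε (ℓ + K)).ncard -
      (((ℓ + K : ℕ) : ℝ) - 1) * (Fs d f x n ε (ℓ + K + 1)).ncard) := by
  induction K with
  | zero => simp
  | succ K ih =>
    rw [Finset.sum_range_succ, ih, N_eq d f x n ε (ℓ + K) (by omega)]
    rw [show ℓ + (K + 1) = ℓ + K + 1 from rfl, show ℓ + K + 1 + 1 = ℓ + K + 2 from rfl]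
    push_cast
    ring

lemma RRate_eq (ℓ : ℕ) (hℓ : 1 ≤ ℓ) : RRate d f x n ε ℓ =
    ((ℓ : ℝ) * (Fs d f x n ε ℓ).ncard - ((ℓ : ℝ) - 1) * (Fs d f x n ε (ℓ + 1)).ncard) /
      ((n : ℝ) ^ 2 - n) := by
  unfold RRate
  rw [tsum_eq_sum (s := Finset.range (n + 1))]
  · simp only [Pline, ← mul_div_assoc]
    rw [← Finset.sum_div, partial_sum d f x n ε ℓ hℓ (n + 1),
      Fs_zero d f x n ε (ℓ + (n + 1)) (by omega), Fs_zero d f x n ε (ℓ + (n + 1) + 1) (by omega)]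
    simp
  · intro k hk
    have hk' : n < k := by simpa using hk
    have := N_eq d f x n ε (ℓ + k) (by omega)
    rw [Fs_zero d f x n ε (ℓ + k) (by omega), Fs_zero d f x n ε (ℓ + k + 1) (by omega),
      Fs_zero d f x n ε (ℓ + k + 2) (by omega)] at this
    simp [Pline, this]

end lines

lemma shift_iter {α : Type*} (z : ℕ → α) (i t : ℕ) : (shift^[i] z) t = z (i + t) := by
  induction i generalizing z with
  | zero => simp
  | succ i ih =>
    rw [Function.iterate_succ, Function.comp, ih]
    simp only [shift]
    congr 1
    ring

lemma seqDist_le {α : Type*} (u v : ℕ → α) (h : ℕ) :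
    seqDist u v ≤ (2 : ℝ) ^ (-(h : ℤ)) ↔ ∀ t, t < h → u t = v t := by
  unfold seqDist
  by_cases huv : u = v
  · subst huv
    simp only [if_true]
    exact ⟨fun _ _ _ => trivial, fun _ => by positivity⟩
  · rw [if_neg huv]
    rw [zpow_le_zpow_iff_right₀ (by norm_num : (1 : ℝ) < 2)]
    have hne : {i : ℕ | u i ≠ v i}.Nonempty := by
      by_contra hc
      rw [Set.not_nonempty_iff_eq_empty] at hc
      apply huv
      funext i
      by_contra hi
      have : i ∈ {i : ℕ | u i ≠ v i} := hi
      rw [hc] at this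
      exact this
    have hmem := Nat.sInf_mem hne
    constructor
    · intro hle t ht
      by_contra hc
      have := Nat.sInf_le (show t ∈ {i : ℕ | u i ≠ v i} from hc)
      omega
    · intro hall
      by_contra hc
      exact hmem (hall _ (by omega))

lemma RPone_iff (y : ℕ → Bool) (m h i j : ℕ) (hm : 1 ≤ m) (hh : 1 ≤ h) :
    RPone seqDist shift (embedSeq m y) ((2 : ℝ) ^ (-(h : ℤ))) i j ↔
      agree y (h + m - 1) i j := by
  unfold RPone
  rw [seqDist_le]
  simp only [shift_iter]
  constructor
  · intro H t ht
    have h1 := congrFun (H (min t (h - 1)) (by omega)) ⟨t - min t (h - 1), by omega⟩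
    simp only [embedSeq] at h1
    rwa [show i + min t (h - 1) + (t - min t (h - 1)) = i + t by omega,
      show j + min t (h - 1) + (t - min t (h - 1)) = j + t by omega] at h1
  · intro H t ht
    funext s
    have := H (t + s) (by have := s.2; omega)
    simpa [embedSeq, add_assoc] using this

lemma Fs_AA (y : ℕ → Bool) (m h k n : ℕ) (hm : 1 ≤ m) (hh : 1 ≤ h) (hk : 1 ≤ k) (hn : k ≤ n) :
    (Fs seqDist shift (embedSeq m y) n ((2 : ℝ) ^ (-(h : ℤ))) k).ncard + (n + 1 - k) =
      AA y (h + m - 1 + (k - 1)) (n + 1 - k) := by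
  set N := n + 1 - k with hN
  set H := h + m - 1 with hH
  have h1 : Fs seqDist shift (embedSeq m y) n ((2 : ℝ) ^ (-(h : ℤ))) k =
      (((Finset.range N ×ˢ Finset.range N).filter fun p =>
        wd y (H + (k - 1)) p.1 = wd y (H + (k - 1)) p.2 ∧ p.1 ≠ p.2 : Finset (ℕ × ℕ)) :
          Set (ℕ × ℕ)) := by
    ext p
    simp only [Finset.coe_filter, Finset.mem_product, Finset.mem_range, Set.mem_ofPred_eq,
        ← agree_iff]
    constructor
    · rintro ⟨a1, a2, a3, a4⟩
      refine ⟨⟨by omega, by omega⟩, fun t ht => ?_, a1⟩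
      have := (RPone_iff y m h _ _ hm hh).1 (a4 (min t (k - 1)) (by omega))
        (t - min t (k - 1)) (by omega)
      rwa [show p.1 + min t (k - 1) + (t - min t (k - 1)) = p.1 + t by omega,
        show p.2 + min t (k - 1) + (t - min t (k - 1)) = p.2 + t by omega] at this
    · rintro ⟨⟨a1, a2⟩, a3, a4⟩
      refine ⟨a4, by omega, by omega, fun t ht => ?_⟩
      rw [RPone_iff y m h _ _ hm hh]
      intro s hs
      have := a3 (t + s) (by omega)
      simpa [add_assoc] using this
  rw [h1, Set.ncard_coe_finset]
  have h2 : N = ((Finset.range N ×ˢ Finset.range N).filter fun p =>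
      wd y (H + (k - 1)) p.1 = wd y (H + (k - 1)) p.2 ∧ ¬ p.1 ≠ p.2).card := by
    conv_lhs => rw [← Finset.card_range N]
    refine Finset.card_bij (fun i _ => (i, i)) ?_ ?_ ?_
    · intro i hi; simpa using hi
    · intro i _ j _ hij; simpa using hij
    · rintro ⟨i, j⟩ hp
      simp only [Finset.mem_filter, Finset.mem_product, Finset.mem_range, not_not] at hp
      obtain ⟨⟨b1, b2⟩, b3, rfl⟩ := hp
      exact ⟨i, by simpa using b1, rfl⟩
  have h3 := Finset.card_filter_add_card_filter_not
    (s := (Finset.range N ×ˢ Finset.range N).filter fun p =>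
      wd y (H + (k - 1)) p.1 = wd y (H + (k - 1)) p.2) (fun p : ℕ × ℕ => p.1 ≠ p.2)
  rw [Finset.filter_filter, Finset.filter_filter, ← h2] at h3
  exact h3

lemma Fs_lim {y : ℕ → Bool} {c : ℕ → ℝ}
    (hc : ∀ L, Tendsto (fun n : ℕ => (AA y L n : ℝ) / (n : ℝ) ^ 2) atTop (𝓝 (c L)))
    (m h k : ℕ) (hm : 1 ≤ m) (hh : 1 ≤ h) (hk : 1 ≤ k) :
    Tendsto (fun n : ℕ => ((Fs seqDist shift (embedSeq m y) n ((2 : ℝ) ^ (-(h : ℤ))) k).ncard : ℝ) /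
      ((n : ℝ) ^ 2 - n)) atTop (𝓝 (c (h + m - 1 + (k - 1)))) := by
  have hsub : Tendsto (fun n : ℕ => n + 1 - k) atTop atTop := by
    rw [tendsto_atTop_atTop]
    exact fun b => ⟨b + k, fun a ha => by omega⟩
  have h1 : Tendsto (fun N : ℕ => (AA y (h + m - 1 + (k - 1)) N : ℝ) / (N : ℝ) ^ 2 - 1 / (N : ℝ))
      atTop (𝓝 (c (h + m - 1 + (k - 1)) - 0)) :=
    (hc _).sub tendsto_one_div_atTop_nhds_zero_nat
  have h2 := h1.comp hsub
  -- ratio of normalisations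
  have h3 : Tendsto (fun n : ℕ => (1 + (1 - (k : ℝ)) * (1 / (n : ℝ))) ^ 2 / (1 - 1 / (n : ℝ))) atTop
      (𝓝 ((1 + (1 - (k : ℝ)) * 0) ^ 2 / (1 - 0))) := by
    refine Tendsto.div ((tendsto_const_nhds.add
      (tendsto_one_div_atTop_nhds_zero_nat.const_mul _)).pow 2)
      (tendsto_const_nhds.sub tendsto_one_div_atTop_nhds_zero_nat) (by norm_num)
  have h4 := h2.mul h3
  rw [mul_zero, add_zero, sub_zero, sub_zero, one_pow, div_one, mul_one] at h4
  refine h4.congr' ?_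
  filter_upwards [eventually_ge_atTop (k + 2)] with n hn
  have h5 := Fs_AA y m h k n hm hh hk (by omega)
  have h6 : ((n + 1 - k : ℕ) : ℝ) = n + 1 - k := by
    rw [Nat.cast_sub (by omega)]; push_cast; ring
  simp only [Function.comp]
  rw [← h5]
  push_cast
  rw [h6]
  have hn1 : (k : ℝ) + 2 ≤ n := by exact_mod_cast hn
  have hk1 : (1 : ℝ) ≤ k := by exact_mod_cast hk
  have e1 : (n : ℝ) ≠ 0 := by linarith
  have e2 : (n : ℝ) + 1 - k ≠ 0 := by linarith
  have e3 : (n : ℝ) - 1 ≠ 0 := by linarith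
  have e4 : (n : ℝ) ^ 2 - n ≠ 0 := by
    rw [show (n : ℝ) ^ 2 - n = n * (n - 1) by ring]; exact mul_ne_zero e1 e3
  have e5 : 1 - 1 / (n : ℝ) ≠ 0 := by
    rw [show 1 - 1 / (n : ℝ) = (n - 1) / n by field_simp]; exact div_ne_zero e3 e1
  rw [show 1 - 1 / (n : ℝ) = (n - 1) / n by field_simp,
    show (n : ℝ) ^ 2 - n = n * (n - 1) by ring,
    show 1 + (1 - (k : ℝ)) * (1 / n) = (n + 1 - k) / n by field_simp; ring]
  field_simp
  ring

lemma RRate_lim {y : ℕ → Bool} {c : ℕ → ℝ}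
    (hc : ∀ L, Tendsto (fun n : ℕ => (AA y L n : ℝ) / (n : ℝ) ^ 2) atTop (𝓝 (c L)))
    (m h ℓ : ℕ) (hm : 1 ≤ m) (hh : 1 ≤ h) (hℓ : 1 ≤ ℓ) :
    Tendsto (fun n : ℕ => RRate seqDist shift (embedSeq m y) n ((2 : ℝ) ^ (-(h : ℤ))) ℓ)
      atTop (𝓝 ((ℓ : ℝ) * c (h + m - 1 + (ℓ - 1)) - ((ℓ : ℝ) - 1) * c (h + m - 1 + ℓ))) := by
  have h1 := ((Fs_lim hc m h ℓ hm hh hℓ).const_mul (ℓ : ℝ)).sub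
    ((Fs_lim hc m h (ℓ + 1) hm hh (by omega)).const_mul ((ℓ : ℝ) - 1))
  refine h1.congr fun n => ?_
  rw [RRate_eq _ _ _ _ _ _ hℓ]
  ring

end RQAaux

/-- for a primitive aperiodic binary substitution of constant length,
the asymptotic recurrence rates RR_ℓ(y^{(m)},∞,2^{-h}) exist and
RR_{ℓ+1}(y^{(m)},∞,2^{-h})/RR_ℓ(y^{(m)},∞,2^{-h}) → 1 as h → ∞. -/
theorem ratio_RRate_tendsto_one
    (ζ : Bool → List Bool) (q : ℕ) (hζ : IsConstLenSubst ζ q)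
    (hprim : IsPrimitive ζ) (hap : IsAperiodic ζ)
    (y : ℕ → Bool) (hy : y ∈ SubstShift ζ)
    (m ℓ : ℕ) (hm : 1 ≤ m) (hℓ : 1 ≤ ℓ) :
    ∃ R R' : ℕ → ℝ,
      (∀ h : ℕ, 1 ≤ h →
        Tendsto (fun n : ℕ => RRate seqDist shift (embedSeq m y) n ((2:ℝ) ^ (-(h:ℤ))) ℓ)
          atTop (𝓝 (R h)) ∧
        Tendsto (fun n : ℕ => RRate seqDist shift (embedSeq m y) n ((2:ℝ) ^ (-(h:ℤ))) (ℓ + 1))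
          atTop (𝓝 (R' h))) ∧
      Tendsto (fun h : ℕ => R' h / R h) atTop (𝓝 1) := by
  obtain ⟨R, hR⟩ := RQAaux.lin_rec_seq hζ hprim
  have hLR : RQAaux.LinRec y R := fun i j n => hR y hy y hy i j n
  obtain ⟨c, hc, hlow, h0⟩ := RQAaux.corr_exists hLR
    (fun M => RQAaux.no_return hζ hprim hap hy M)
  have hcpos0 : ∀ L, 0 ≤ c L := fun L => ge_of_tendsto' (hc L) fun n => by positivity
  have hanti : ∀ L, c (L + 1) ≤ c L := fun L =>
    le_of_tendsto_of_tendsto' (hc (L + 1)) (hc L) fun n =>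
      div_le_div_of_nonneg_right (by exact_mod_cast RQAaux.AA_mono y L n) (by positivity)
  have hconv : ∀ L, c (L + 1) - c (L + 2) ≤ c L - c (L + 1) := by
    intro L
    have h1 := (hc (L + 1)).add (RQAaux.tendsto_succ_ratio (hc (L + 1)))
    have h2 := (hc (L + 2)).add (RQAaux.tendsto_succ_ratio (hc L))
    have := le_of_tendsto_of_tendsto' h1 h2 fun n => by
      rw [← add_div, ← add_div]
      exact div_le_div_of_nonneg_right (by exact_mod_cast RQAaux.AA_convex y L n) (by positivity)
    linarith
  have hlow' : ∀ L : ℕ, 1 ≤ c L * (((R : ℝ) + 1) * L + 1) := by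
    intro L
    refine (hlow L).trans (mul_le_mul_of_nonneg_left ?_ (hcpos0 L))
    have : (0 : ℝ) ≤ L := Nat.cast_nonneg L
    linarith
  have hpos : ∀ L, 0 < c L := fun L => by
    rcases (hcpos0 L).lt_or_eq with h | h
    · exact h
    · have := hlow L
      rw [← h] at this
      norm_num at this
  have hrat := RQAaux.ratio_c ((R : ℝ) + 1) (by positivity) hanti hconv hlow' h0
  refine ⟨_, _, fun h hh => ⟨RQAaux.RRate_lim hc m h ℓ hm hh hℓ,
    RQAaux.RRate_lim hc m h (ℓ + 1) hm hh (by omega)⟩, ?_⟩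
  have hs : Tendsto (fun h : ℕ => h + m - 1 + (ℓ - 1)) atTop atTop := by
    rw [tendsto_atTop_atTop]
    exact fun b => ⟨b, fun a ha => by omega⟩
  have hs1 : Tendsto (fun h : ℕ => h + m - 1 + ℓ) atTop atTop := by
    rw [tendsto_atTop_atTop]
    exact fun b => ⟨b, fun a ha => by omega⟩
  have r1 := hrat.comp hs
  have r2 := hrat.comp hs1
  have hnum := (r1.const_mul ((ℓ : ℝ) + 1)).sub ((r1.mul r2).const_mul (ℓ : ℝ))
  have hden := (tendsto_const_nhds (x := (ℓ : ℝ))).sub (r1.const_mul ((ℓ : ℝ) - 1))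
  have hq := hnum.div hden (by ring_nf; norm_num)
  rw [show (((ℓ : ℝ) + 1) * 1 - ℓ * (1 * 1)) / (ℓ - (ℓ - 1) * 1) = 1 by ring_nf] at hq
  refine hq.congr fun h => ?_
  simp only [Function.comp, Pi.div_apply]
  rw [show h + m - 1 + (ℓ - 1) + 1 = h + m - 1 + ℓ by omega,
    show h + m - 1 + (ℓ + 1 - 1) = h + m - 1 + ℓ by omega,
    show h + m - 1 + (ℓ + 1) = h + m - 1 + ℓ + 1 by omega]
  have p1 := hpos (h + m - 1 + (ℓ - 1))
  have p2 := hpos (h + m - 1 + ℓ)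
  set a := c (h + m - 1 + (ℓ - 1))
  set b := c (h + m - 1 + ℓ)
  set e := c (h + m - 1 + ℓ + 1)
  have n1 : ((ℓ : ℝ) + 1) * (b / a) - ℓ * (b / a * (e / b)) = ((ℓ + 1) * b - ℓ * e) / a := by
    field_simp
  have n2 : (ℓ : ℝ) - (ℓ - 1) * (b / a) = (ℓ * a - (ℓ - 1) * b) / a := by
    field_simp
  rw [n1, n2, div_div_div_cancel_right₀ p1.ne']
  push_cast
  ring
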